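/- arXiv:2103.03300 — 4 statements merged into one kernel-verified Lean document; each statement's English description precedes it below -/
import Mathlib

section
/- Lemma 1 (restriction to completing policies). The optimal value of (RO) equals the optimal value of (RO_T), i.e., sup_μ (1/N) Σ_{i=1}^N inf_{y ∈ U^i} g(τ_μ(y), x^i) over all exercise policies equals the same supremum restricted to exercise policies μ such that for every i ∈ {1,…,N} there exists t ∈ {1,…,T} with μ_t(y_t) = Stop for all y_t ∈ U^i_t. -/
/-!
Stopping at the last period whenever a policy has not stopped before costs nothing: along any
trajectory where the policy already stops, the stopping time is unchanged, and along the others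
the reward rises from `g(∞, ·) = 0` to some nonnegative `g(T, ·)`. Thus the completed policy, which
stops on all of `U^i_T` for every `i`, dominates the original one trajectory by trajectory
(`stopReward_le_complete`), hence in the worst case and on average. Each of the two value sets is
therefore cofinal in the other, so their suprema agree.
-/

namespace RobustStopping

noncomputable section

/-- The state space `X = ℝ^d`, equipped with the sup-norm. -/
abbrev State (d : ℕ) := Fin d → ℝ

/-- The space of paths `X^T`, equipped with the sup-norm. -/
abbrev Path (T d : ℕ) := Fin T → State d

variable {T d N : ℕ}

/-- Reward `g(τ_μ(y), z)`: the reward obtained when the Markovian stopping rule of the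
exercise policy `μ` is evaluated along the trajectory `y` and the reward function is
evaluated along the path `z`.  Since `g(∞, z) = 0`, the value is `0` if the rule never
stops.  A policy is a tuple of maps `μ t : State d → Bool`, `true` meaning `Stop`. -/
def stopReward (g : Fin T → Path T d → ℝ) (μ : Fin T → State d → Bool)
    (y z : Path T d) : ℝ :=
  if h : (Finset.univ.filter (fun t => μ t (y t) = true)).Nonempty then
    g ((Finset.univ.filter (fun t => μ t (y t) = true)).min' h) z
  else 0

/-- `inf_{y ∈ U^i} g(τ_μ(y), x^i)`, where `U^i = U^i_1 × ⋯ × U^i_T` with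
`U^i_t = {s : ‖s − x^i_t‖_∞ ≤ ε}`. -/
def worstCase (g : Fin T → Path T d → ℝ) (μ : Fin T → State d → Bool)
    (ε : ℝ) (z : Path T d) : ℝ :=
  sInf ((fun y => stopReward g μ y z) '' {y : Path T d | ∀ t, ‖y t - z t‖ ≤ ε})

/-- Objective value of the robust optimization problem (RO) for the policy `μ`. -/
def robObj (x : Fin N → Path T d) (ε : ℝ) (g : Fin T → Path T d → ℝ)
    (μ : Fin T → State d → Bool) : ℝ :=
  (N : ℝ)⁻¹ * ∑ i, worstCase g μ ε (x i)

/-- The exercise policy `μ^{σ¹⋯σᴺ}`: stop at period `t`, state `s`, iff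
`s ∈ ⋃_{i : σ^i = t} U^i_t`. -/
def sigmaPolicy (x : Fin N → Path T d) (ε : ℝ) (σ : Fin N → Fin T) :
    Fin T → State d → Bool :=
  fun t s => @decide (∃ i : Fin N, σ i = t ∧ ‖s - x i t‖ ≤ ε) (Classical.propDecidable _)

/-- `U^i_t ∩ U^j_t ≠ ∅`, where the uncertainty sets are the closed `ε`-balls (sup-norm)
around the given centers. -/
def intersects (ε : ℝ) (a b : State d) : Prop :=
  ∃ s : State d, ‖s - a‖ ≤ ε ∧ ‖s - b‖ ≤ ε

/-- Objective value of the finite-dimensional problem (IP) at `σ¹,…,σᴺ`. -/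
def ipObj (x : Fin N → Path T d) (ε : ℝ) (g : Fin T → Path T d → ℝ)
    (σ : Fin N → Fin T) : ℝ :=
  (N : ℝ)⁻¹ * ∑ i, sInf {r : ℝ | ∃ t : Fin T, t ≤ σ i ∧
    (∃ j : Fin N, intersects ε (x i t) (x j t) ∧ σ j = t) ∧ r = g t (x i)}

/-- Feasibility for (RO_T): for every sample path `i` there is a period `t` at which the
policy stops on all of `U^i_t`. -/
def FeasROT (x : Fin N → Path T d) (ε : ℝ) (μ : Fin T → State d → Bool) : Prop :=
  ∀ i : Fin N, ∃ t : Fin T, ∀ s : State d, ‖s - x i t‖ ≤ ε → μ t s = true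

/-- The set of periods at which `μ` stops on all of `U^i_t`. -/
def stopSet (x : Fin N → Path T d) (ε : ℝ) (μ : Fin T → State d → Bool)
    (i : Fin N) : Finset (Fin T) :=
  @Finset.filter (Fin T) (fun t => ∀ s : State d, ‖s - x i t‖ ≤ ε → μ t s = true)
    (Classical.decPred _) Finset.univ

/-- `μ'` is a pruned version of `μ`. -/
def Pruned (x : Fin N → Path T d) (ε : ℝ)
    (μ' μ : Fin T → State d → Bool) : Prop :=
  (∀ (t : Fin T) (s : State d), μ' t s = true → μ t s = true) ∧
  ∀ i : Fin N, (stopSet x ε μ' i).min = (stopSet x ε μ i).min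

/-- Real value of a Boolean variable. -/
def bval (b : Bool) : ℝ := if b then 1 else 0

/-- `K^i`: the set of distinct values among `g(1,x^i),…,g(T,x^i)` and `0`. -/
def Kset (x : Fin N → Path T d) (g : Fin T → Path T d → ℝ) (i : Fin N) : Finset ℝ :=
  insert 0 (Finset.image (fun t => g t (x i)) Finset.univ)

/-- `κ^i_ℓ` in zero-based indexing: the `ℓ`-th smallest element of `K^i` (and `0` for
out-of-range indices). -/
def kapN (x : Fin N → Path T d) (g : Fin T → Path T d → ℝ) (i : Fin N) (ℓ : ℕ) : ℝ :=
  if h : ℓ < (Kset x g i).card then (((Kset x g i).orderIsoOfFin rfl ⟨ℓ, h⟩ : Kset x g i) : ℝ)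
  else 0

/-- `L^i_t` in zero-based indexing: the unique index with `κ^i_{L^i_t} = g(t, x^i)`. -/
def Lidx (x : Fin N → Path T d) (g : Fin T → Path T d → ℝ) (i : Fin N) (t : Fin T) :
    Fin (Kset x g i).card :=
  ((Kset x g i).orderIsoOfFin rfl).symm
    ⟨g t (x i), by
      unfold Kset
      exact Finset.mem_insert_of_mem (Finset.mem_image_of_mem _ (Finset.mem_univ t))⟩

/-- Feasibility for the bilinear program (BP).  In zero-based indexing, the paper's
index `ℓ ∈ {1,…,|K^i|}` corresponds to `ℓ ∈ {0,…,|K^i|−1}`. -/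
def FeasBP (x : Fin N → Path T d) (ε : ℝ) (g : Fin T → Path T d → ℝ)
    (b : Fin N → Fin T → Bool) (w : Fin N → Fin T → ℕ → ℝ) : Prop :=
  (∀ (i : Fin N) (t : Fin T) (h : (t : ℕ) + 1 < T) (ℓ : ℕ),
      ℓ < (Kset x g i).card → w i t ℓ ≤ w i ⟨(t : ℕ) + 1, h⟩ ℓ) ∧
  (∀ (i : Fin N) (t : Fin T) (ℓ : ℕ),
      ℓ + 1 < (Kset x g i).card → w i t ℓ ≤ w i t (ℓ + 1)) ∧
  (∀ (i : Fin N) (t : Fin T) (h : (t : ℕ) + 1 < T),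
      bval (b i t) ≤ w i ⟨(t : ℕ) + 1, h⟩ 0) ∧
  (∀ (i j : Fin N) (t : Fin T), intersects ε (x i t) (x j t) →
      bval (b j t) ≤ w i t ((Lidx x g i t : ℕ)))

/-- Objective value of the bilinear program (BP). -/
def BPobj (x : Fin N → Path T d) (g : Fin T → Path T d → ℝ)
    (b : Fin N → Fin T → Bool) (w : Fin N → Fin T → ℕ → ℝ) : ℝ :=
  (N : ℝ)⁻¹ * ∑ i, ∑ t, ∑ ℓ ∈ Finset.range ((Lidx x g i t : ℕ)),
    (kapN x g i (ℓ + 1) - kapN x g i ℓ) * bval (b i t) * (1 - w i t ℓ)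

/-- `σ^i = min{ min{t : b^i_t = 1}, T }`. -/
def sigmaOf (hT : 0 < T) (b : Fin N → Fin T → Bool) (i : Fin N) : Fin T :=
  if h : (Finset.univ.filter (fun t => b i t = true)).Nonempty then
    (Finset.univ.filter (fun t => b i t = true)).min' h
  else ⟨T - 1, by omega⟩

/-- `ψ^i(b)` from (BP-1). -/
def psi (x : Fin N → Path T d) (ε : ℝ) (g : Fin T → Path T d → ℝ)
    (b : Fin N → Fin T → Bool) (i : Fin N) : ℝ :=
  ∑ t : Fin T,
    (bval (b i t) * ∏ s ∈ Finset.univ.filter (fun s => s < t), (1 - bval (b i s))) *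
      sInf {r : ℝ | ∃ s : Fin T, s ≤ t ∧
        (∃ j : Fin N, intersects ε (x i s) (x j s) ∧ b j s = true) ∧ r = g s (x i)}

/-- The last period `T` as an element of `Fin T`. -/
def lastT (hT : 0 < T) : Fin T := ⟨T - 1, by omega⟩

/-- `T^i`: the smallest period at which `t ↦ g(t, x^i)` attains its maximum. -/
def Tmax (hT : 0 < T) (x : Fin N → Path T d) (g : Fin T → Path T d → ℝ)
    (i : Fin N) : Fin T :=
  (Finset.univ.filter (fun t : Fin T => ∀ s : Fin T, g s (x i) ≤ g t (x i))).min' (by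
    haveI : Nonempty (Fin T) := ⟨⟨0, hT⟩⟩
    obtain ⟨t, -, ht⟩ :=
      Finset.exists_max_image Finset.univ (fun t : Fin T => g t (x i)) Finset.univ_nonempty
    exact ⟨t, Finset.mem_filter.mpr ⟨Finset.mem_univ t, fun s => ht s (Finset.mem_univ s)⟩⟩)

/-- Feasibility for the reduced problem (H̄). -/
def FeasH (hT : 0 < T) (x : Fin N → Path T d) (ε : ℝ) (g : Fin T → Path T d → ℝ)
    (b : Fin N → Bool) (w : Fin N → Fin T → ℕ → ℝ) : Prop :=
  (∀ (i : Fin N) (t : Fin T), (t = Tmax hT x g i ∨ t = lastT hT) →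
      ∀ ℓ : ℕ, ℓ + 1 < (Kset x g i).card → w i t ℓ ≤ w i t (ℓ + 1)) ∧
  (∀ i : Fin N, (Tmax hT x g i : ℕ) + 1 < T → bval (b i) ≤ w i (lastT hT) 0) ∧
  (∀ (i j : Fin N) (t : Fin T), (t = Tmax hT x g i ∨ t = lastT hT) →
      Tmax hT x g j ≤ t → (Tmax hT x g j : ℕ) + 1 < T →
      intersects ε (x i (Tmax hT x g j)) (x j (Tmax hT x g j)) →
      bval (b j) ≤ w i t ((Lidx x g i (Tmax hT x g j) : ℕ)))

/-- Objective value of the reduced problem (H̄). -/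
def Hobj (hT : 0 < T) (x : Fin N → Path T d) (g : Fin T → Path T d → ℝ)
    (b : Fin N → Bool) (w : Fin N → Fin T → ℕ → ℝ) : ℝ :=
  (N : ℝ)⁻¹ * ∑ i ∈ Finset.univ.filter (fun i : Fin N => (Tmax hT x g i : ℕ) + 1 < T),
      ∑ ℓ ∈ Finset.range ((Lidx x g i (Tmax hT x g i) : ℕ)),
        (kapN x g i (ℓ + 1) - kapN x g i ℓ) * (bval (b i) - w i (Tmax hT x g i) ℓ)
  + (N : ℝ)⁻¹ * ∑ i : Fin N, ∑ ℓ ∈ Finset.range ((Lidx x g i (lastT hT) : ℕ)),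
        (kapN x g i (ℓ + 1) - kapN x g i ℓ) * (1 - w i (lastT hT) ℓ)


/-- The completion of a policy `μ`: follow `μ`, but stop unconditionally at the last period. -/
def complete (μ : Fin T → State d → Bool) : Fin T → State d → Bool :=
  fun t s => μ t s || decide ((t : ℕ) + 1 = T)

lemma stopReward_nonneg {g : Fin T → Path T d → ℝ} (hg0 : ∀ t y, 0 ≤ g t y)
    (μ : Fin T → State d → Bool) (y z : Path T d) : 0 ≤ stopReward g μ y z := by
  unfold stopReward
  split_ifs
  · exact hg0 _ _
  · exact le_rfl

lemma stopReward_le_complete {g : Fin T → Path T d → ℝ} (hg0 : ∀ t y, 0 ≤ g t y)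
    (μ : Fin T → State d → Bool) (y z : Path T d) :
    stopReward g μ y z ≤ stopReward g (complete μ) y z := by
  by_cases h : (Finset.univ.filter (fun t => μ t (y t) = true)).Nonempty
  · have hsub : Finset.univ.filter (fun t => μ t (y t) = true) ⊆
        Finset.univ.filter (fun t => complete μ t (y t) = true) := by
      intro t ht
      simp only [Finset.mem_filter, Finset.mem_univ, true_and] at ht ⊢
      simp [complete, ht]
    have h' := h.mono hsub
    have hmin : (Finset.univ.filter (fun t => complete μ t (y t) = true)).min' h' =
        (Finset.univ.filter (fun t => μ t (y t) = true)).min' h := by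
      apply le_antisymm (Finset.min'_subset h hsub)
      -- The only period the completion can add is the last one, which bounds every period.
      apply Finset.le_min'
      intro t ht
      simp only [complete, Finset.mem_filter, Finset.mem_univ, true_and, Bool.or_eq_true,
        decide_eq_true_eq] at ht
      rcases ht with ht | ht
      · exact Finset.min'_le _ _ (by simpa using ht)
      · rw [Fin.le_def]
        omega
    unfold stopReward
    rw [dif_pos h, dif_pos h', hmin]
  · have h0 : stopReward g μ y z = 0 := by
      unfold stopReward
      rw [dif_neg h]
    rw [h0]
    exact stopReward_nonneg hg0 _ y z

lemma worstCase_le_complete {g : Fin T → Path T d → ℝ} (hg0 : ∀ t y, 0 ≤ g t y)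
    (μ : Fin T → State d → Bool) {ε : ℝ} (hε : 0 ≤ ε) (z : Path T d) :
    worstCase g μ ε z ≤ worstCase g (complete μ) ε z := by
  -- The uncertainty set contains `z`, and rewards are bounded below by `0`, so both infima
  -- are genuine.
  refine le_csInf (Set.Nonempty.image _ ⟨z, fun t => by simpa using hε⟩) ?_
  rintro _ ⟨y, hy, rfl⟩
  refine (csInf_le ⟨0, ?_⟩ (Set.mem_image_of_mem _ hy)).trans
    (stopReward_le_complete hg0 μ y z)
  rintro _ ⟨y', -, rfl⟩
  exact stopReward_nonneg hg0 μ y' z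

lemma feasROT_complete (hT : 0 < T) (x : Fin N → Path T d) (ε : ℝ)
    (μ : Fin T → State d → Bool) : FeasROT x ε (complete μ) := by
  intro i
  refine ⟨lastT hT, fun s _ => ?_⟩
  have h : T - 1 + 1 = T := by omega
  simp [complete, lastT, h]

/-- **Lemma 1 (restriction to completing policies).**  The optimal value of (RO) equals
the optimal value of (RO_T). -/
theorem restriction_to_completing_policies
    {T d N : ℕ} (hT : 0 < T) (hd : 0 < d) (hN : 0 < N)
    (x : Fin N → Path T d) (ε : ℝ) (hε : 0 ≤ ε)
    (g : Fin T → Path T d → ℝ) (hg0 : ∀ t y, 0 ≤ g t y) :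
    sSup {v : ℝ | ∃ μ : Fin T → State d → Bool, v = robObj x ε g μ}
      = sSup {v : ℝ | ∃ μ : Fin T → State d → Bool,
          FeasROT x ε μ ∧ v = robObj x ε g μ} := by
  refine csSup_eq_csSup_of_forall_exists_le ?_ ?_
  · rintro _ ⟨μ, rfl⟩
    refine ⟨_, ⟨complete μ, feasROT_complete hT x ε μ, rfl⟩, ?_⟩
    exact mul_le_mul_of_nonneg_left
      (Finset.sum_le_sum fun i _ => worstCase_le_complete hg0 μ hε (x i)) (by positivity)
  · rintro _ ⟨μ, -, rfl⟩
    exact ⟨_, ⟨μ, rfl⟩, le_rfl⟩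

end
end RobustStopping
end

section
/- Lemma 4 (the induced policy is a pruned version). Let μ = (μ_1,…,μ_T) be an exercise policy feasible for (RO_T), and for each i ∈ {1,…,N} define σ^i = min{t ∈ {1,…,T} : μ_t(y_t) = Stop for all y_t ∈ U^i_t}. Then μ^{σ^1⋯σ^N} is a pruned version of μ. -/
/-!
The induced policy stops at `(t, s)` only if `s` lies in some `U^j_t` with `σ j = t`, and there `μ`
stops by the choice of `σ j`; so its stopping regions are contained in those of `μ`. Consequently
the induced policy cannot stop on all of `U^i_t` earlier than `μ` does, that is before `σ i`, while
at `σ i` it stops on all of `U^i_{σ i}` by construction. Hence both policies have `σ i` as the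
least period in their `stopSet`.
-/

namespace RobustStopping

noncomputable section

variable {T d N : ℕ}

/-- If `t₀` is the least period at which `μ` stops on all of `U^i_t`, then `t₀` is the value of
`Finset.min` on `stopSet`, as an element of `WithTop (Fin T)`. -/
lemma stopSet_min_of_isLeast {x : Fin N → Path T d} {ε : ℝ} {μ : Fin T → State d → Bool}
    {i : Fin N} {t₀ : Fin T}
    (h : IsLeast {t : Fin T | ∀ s : State d, ‖s - x i t‖ ≤ ε → μ t s = true} t₀) :
    (stopSet x ε μ i).min = (t₀ : WithTop (Fin T)) := by
  refine le_antisymm (Finset.min_le ?_) (Finset.le_min fun t ht => WithTop.coe_le_coe.2 ?_)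
  · simpa [stopSet] using h.1
  · exact h.2 (by simpa [stopSet] using ht)

/-- **Lemma 4 (the induced policy is a pruned version).**  If `μ` is feasible for (RO_T)
and `σ^i = min{t : μ_t stops on all of U^i_t}`, then `μ^{σ¹⋯σᴺ}` is a pruned version of `μ`. -/
theorem induced_policy_is_pruned
    {T d N : ℕ} (hT : 0 < T) (hd : 0 < d) (hN : 0 < N)
    (x : Fin N → Path T d) (ε : ℝ) (hε : 0 ≤ ε)
    (g : Fin T → Path T d → ℝ) (hg0 : ∀ t y, 0 ≤ g t y)
    (μ : Fin T → State d → Bool) (hμ : FeasROT x ε μ) (σ : Fin N → Fin T)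
    (hσ : ∀ i : Fin N,
      IsLeast {t : Fin T | ∀ s : State d, ‖s - x i t‖ ≤ ε → μ t s = true} (σ i)) :
    Pruned x ε (sigmaPolicy x ε σ) μ := by
  have hsub : ∀ t s, sigmaPolicy x ε σ t s = true → μ t s = true := by
    intro t s hs
    obtain ⟨i, rfl, hi⟩ : ∃ i : Fin N, σ i = t ∧ ‖s - x i t‖ ≤ ε := by
      simpa [sigmaPolicy] using hs
    exact (hσ i).1 s hi
  refine ⟨hsub, fun i => ?_⟩
  -- `σ i` is also least for the induced policy: its stopping regions lie inside those of `μ`.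
  have hleast : IsLeast {t : Fin T | ∀ s : State d, ‖s - x i t‖ ≤ ε →
      sigmaPolicy x ε σ t s = true} (σ i) := by
    refine ⟨fun s hs => ?_, fun t ht => (hσ i).2 fun s hs => hsub t s (ht s hs)⟩
    simpa [sigmaPolicy] using ⟨i, rfl, hs⟩
  rw [stopSet_min_of_isLeast hleast, stopSet_min_of_isLeast (hσ i)]

end
end RobustStopping
end

section
/- Lemma 6 (binary encoding of the integer program). The optimal value of (IP) equals the optimal value of (BP-1). Furthermore, if b is any binary vector (b^i_t) and σ^i := min{ min{t ∈ {1,…,T} : b^i_t = 1}, T } for each i ∈ {1,…,N}, then (1/N) Σ_{i=1}^N min{g(t,x^i) : t ∈ {1,…,σ^i} such that there exists j with U^i_t ∩ U^j_t ≠ ∅ and σ^j = t} ≥ (1/N) Σ_{i=1}^N ψ^i(b). -/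
/-!
The factor `b^i_t ∏_{s<t} (1 - b^i_s)` is the indicator of `t` being the first period with
`b^i_t = 1`, so `ψ^i(b)` is a single minimum, taken at that period, or `0` when `b^i = 0`
(`psi_of_first`, `psi_of_forall_false`).

Let `σ = sigmaOf b`.  If `b^i` has a first one at `σ^i`, every reward admissible in the `i`-th
minimum of (IP) is admissible in the minimum of `ψ^i(b)`: if `σ^j = s ≤ σ^i` then either
`b^j_s = 1`, or `b^j = 0` and `s = T`, which forces `σ^i = T` and lets `i` itself serve as
witness.  The minimum over the smaller set is the larger one; if `b^i = 0`, nonnegativity of the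
rewards suffices.  This is `psi_le_ip_term`.  Conversely, the indicator vector `b^i_t = 1_{t = σ^i}`
reproduces the (IP)-objective at `σ` exactly (`psi_indicator`), and the two optimal values agree.
-/

namespace RobustStopping

noncomputable section

variable {T d N : ℕ}

theorem intersects_self {d : ℕ} {ε : ℝ} (hε : 0 ≤ ε) (a : State d) : intersects ε a a :=
  ⟨a, by simpa using hε, by simpa using hε⟩

theorem psi_of_first {T d N : ℕ} (x : Fin N → Path T d) (ε : ℝ) (g : Fin T → Path T d → ℝ)
    (b : Fin N → Fin T → Bool) (i : Fin N) (t : Fin T) (ht : b i t = true)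
    (hlt : ∀ s, s < t → b i s = false) :
    psi x ε g b i = sInf {r : ℝ | ∃ s : Fin T, s ≤ t ∧
        (∃ j : Fin N, intersects ε (x i s) (x j s) ∧ b j s = true) ∧ r = g s (x i)} := by
  unfold psi
  rw [Finset.sum_eq_single t]
  · rw [Finset.prod_eq_one]
    · simp [bval, ht]
    · intro s hs
      simp [bval, hlt s (Finset.mem_filter.mp hs).2]
  · intro u _ hu
    rcases lt_or_gt_of_ne hu with h | h
    · simp [bval, hlt u h]
    · rw [Finset.prod_eq_zero (i := t) (by simpa using h) (by simp [bval, ht])]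
      simp
  · simp

theorem psi_of_forall_false {T d N : ℕ} (x : Fin N → Path T d) (ε : ℝ)
    (g : Fin T → Path T d → ℝ) (b : Fin N → Fin T → Bool) (i : Fin N)
    (h : ∀ t, b i t = false) : psi x ε g b i = 0 := by
  simp [psi, bval, h]

/-- Either `b^i` has a first one, located at `σ^i`, or `b^i = 0` and `σ^i` is the last period. -/
theorem sigmaOf_spec {T N : ℕ} (hT : 0 < T) (b : Fin N → Fin T → Bool) (i : Fin N) :
    (b i (sigmaOf hT b i) = true ∧ ∀ s, s < sigmaOf hT b i → b i s = false) ∨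
      ((∀ t, b i t = false) ∧ ∀ t, t ≤ sigmaOf hT b i) := by
  unfold sigmaOf
  split_ifs with h
  · left
    refine ⟨(Finset.mem_filter.mp (Finset.min'_mem _ h)).2, fun s hs => ?_⟩
    by_contra hb
    have hmem : s ∈ Finset.univ.filter (fun t => b i t = true) := by simpa using hb
    exact absurd (Finset.min'_le _ s hmem) (not_le.mpr hs)
  · right
    refine ⟨fun t => ?_, fun t => Fin.mk_le_mk.mpr (by omega)⟩
    by_contra hb
    exact h ⟨t, by simpa using hb⟩

theorem psi_le_ip_term {T d N : ℕ} (hT : 0 < T) (x : Fin N → Path T d) (ε : ℝ) (hε : 0 ≤ ε)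
    (g : Fin T → Path T d → ℝ) (hg0 : ∀ t y, 0 ≤ g t y) (b : Fin N → Fin T → Bool)
    (i : Fin N) :
    psi x ε g b i ≤ sInf {r : ℝ | ∃ t : Fin T, t ≤ sigmaOf hT b i ∧
      (∃ j : Fin N, intersects ε (x i t) (x j t) ∧ sigmaOf hT b j = t) ∧ r = g t (x i)} := by
  rcases sigmaOf_spec hT b i with ⟨hi, hlt⟩ | ⟨hi, -⟩
  · rw [psi_of_first x ε g b i _ hi hlt]
    apply csInf_le_csInf
    · refine ⟨0, ?_⟩
      rintro r ⟨s, -, -, rfl⟩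
      exact hg0 _ _
    · exact ⟨_, _, le_rfl, ⟨i, intersects_self hε _, rfl⟩, rfl⟩
    · rintro r ⟨t, ht, ⟨j, hj, rfl⟩, rfl⟩
      rcases sigmaOf_spec hT b j with ⟨hbj, -⟩ | ⟨-, hlast⟩
      · exact ⟨_, ht, ⟨j, hj, hbj⟩, rfl⟩
      · -- `b^j = 0`: both `σ^i` and `σ^j` are the last period, and `i` replaces `j`.
        have heq : sigmaOf hT b j = sigmaOf hT b i := le_antisymm ht (hlast _)
        rw [heq]
        exact ⟨_, le_rfl, ⟨i, intersects_self hε _, hi⟩, rfl⟩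
  · rw [psi_of_forall_false x ε g b i hi]
    apply Real.sInf_nonneg
    rintro r ⟨s, -, -, rfl⟩
    exact hg0 _ _

theorem psi_indicator {T d N : ℕ} (x : Fin N → Path T d) (ε : ℝ)
    (g : Fin T → Path T d → ℝ) (σ : Fin N → Fin T) (i : Fin N) :
    psi x ε g (fun j t => decide (σ j = t)) i = sInf {r : ℝ | ∃ t : Fin T, t ≤ σ i ∧
      (∃ j : Fin N, intersects ε (x i t) (x j t) ∧ σ j = t) ∧ r = g t (x i)} := by
  rw [psi_of_first x ε g _ i (σ i) (by simp) (fun s hs => by simpa using hs.ne')]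
  simp only [decide_eq_true_eq]

/-- **Lemma 6 (binary encoding of the integer program).**  The optimal value of (IP) equals
the optimal value of (BP-1); moreover, every binary vector `b` yields, via
`σ^i = min{min{t : b^i_t = 1}, T}`, integers whose (IP)-objective is at least
`(1/N) Σ_i ψ^i(b)`. -/
theorem binary_encoding_of_integer_program
    {T d N : ℕ} (hT : 0 < T) (hd : 0 < d) (hN : 0 < N)
    (x : Fin N → Path T d) (ε : ℝ) (hε : 0 ≤ ε)
    (g : Fin T → Path T d → ℝ) (hg0 : ∀ t y, 0 ≤ g t y) :
    sSup {v : ℝ | ∃ σ : Fin N → Fin T, v = ipObj x ε g σ}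
        = sSup {v : ℝ | ∃ b : Fin N → Fin T → Bool,
            v = (N : ℝ)⁻¹ * ∑ i, psi x ε g b i} ∧
    ∀ b : Fin N → Fin T → Bool,
      (N : ℝ)⁻¹ * ∑ i, psi x ε g b i ≤ ipObj x ε g (sigmaOf hT b) := by
  have key : ∀ b : Fin N → Fin T → Bool,
      (N : ℝ)⁻¹ * ∑ i, psi x ε g b i ≤ ipObj x ε g (sigmaOf hT b) := fun b =>
    mul_le_mul_of_nonneg_left
      (Finset.sum_le_sum fun i _ => psi_le_ip_term hT x ε hε g hg0 b i) (by positivity)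
  refine ⟨le_antisymm ?_ ?_, key⟩
  · refine csSup_le ⟨_, fun _ => lastT hT, rfl⟩ ?_
    rintro v ⟨σ, rfl⟩
    apply le_csSup
    · have hfin := Set.finite_range (fun b : Fin N → Fin T → Bool =>
        (N : ℝ)⁻¹ * ∑ i, psi x ε g b i)
      refine hfin.bddAbove.mono ?_
      rintro v ⟨b, rfl⟩
      exact ⟨b, rfl⟩
    · refine ⟨fun j t => decide (σ j = t), ?_⟩
      simp only [psi_indicator, ipObj]
  · refine csSup_le ⟨_, fun _ _ => true, rfl⟩ ?_
    rintro v ⟨b, rfl⟩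
    refine (key b).trans (le_csSup ?_ ⟨_, rfl⟩)
    refine (Set.finite_range (ipObj x ε g)).bddAbove.mono ?_
    rintro v ⟨σ, rfl⟩
    exact ⟨σ, rfl⟩

end
end RobustStopping
end

section
/- Approximation by lower-semicontinuous evaluations of stopping rules (Lemma 'bradsmart'). Suppose Assumptions (A3) and (A4) hold. Then sup_μ E[g(τ_μ(x), x)] = sup_μ E[liminf_{y→x} g(τ_μ(y), x)], where for each exercise policy μ and each realization of x, liminf_{y→x} g(τ_μ(y), x) denotes the limit inferior of the function y ↦ g(τ_μ(y), x) as y → x in ℝ^{Td}, and both suprema are over all exercise policies. -/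
/-!
For any policy, `liminf_{y → x} g(τ_μ(y), x) ≤ g(τ_μ(x), x)` because `x` itself belongs to each of
its neighbourhoods; this gives `≥` (`liminf_stopReward_le`).

For `≤`, the stopping regions are replaced by regions whose boundary the path almost surely avoids.
By regularity of the law `ν` of `x_t`, a measurable region `A` contains a compact `K` and lies in an
open `V` with `ν (V \ K)` small, and some thickening of `K` inside `V` has `ν`-null frontier, since
the frontiers of distinct thickenings are disjoint (`exists_null_frontier_approx`).  Off the
frontiers the modified stopping decisions are locally constant, so the liminf equals the reward
itself (`liminf_stopReward_eq`); and outside an event of small probability the modified policy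
makes the same decisions as the original one, so by boundedness of `g` little reward is lost.
-/

open MeasureTheory Filter Topology

namespace RobustStoppingProb

noncomputable section

/-- The state space `X = ℝ^d`, equipped with the sup-norm. -/
abbrev State (d : ℕ) := Fin d → ℝ

/-- The space of paths `X^T`, equipped with the sup-norm. -/
abbrev Path (T d : ℕ) := Fin T → State d

variable {T d : ℕ}

/-- Reward `g(τ_μ(y), z)`: the reward obtained when the Markovian stopping rule of the
exercise policy `μ` is evaluated along the trajectory `y` and the reward function is
evaluated along the path `z`.  Since `g(∞, z) = 0`, the value is `0` if the rule never
stops.  A policy is a tuple of maps `μ t : State d → Bool`, `true` meaning `Stop`. -/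
def stopReward (g : Fin T → Path T d → ℝ) (μ : Fin T → State d → Bool)
    (y z : Path T d) : ℝ :=
  if h : (Finset.univ.filter (fun t => μ t (y t) = true)).Nonempty then
    g ((Finset.univ.filter (fun t => μ t (y t) = true)).min' h) z
  else 0

/-- An exercise policy: a tuple of measurable maps `μ_t : X → {Stop, Continue}`. -/
def MeasPolicy (μ : Fin T → State d → Bool) : Prop := ∀ t, Measurable (μ t)

/-- `inf{g(τ_μ(y), z) : ‖y − z‖_∞ ≤ ε}`. -/
def worstCase (g : Fin T → Path T d → ℝ) (μ : Fin T → State d → Bool)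
    (ε : ℝ) (z : Path T d) : ℝ :=
  sInf ((fun y => stopReward g μ y z) '' {y : Path T d | ‖y - z‖ ≤ ε})

/-- `Ĵ_{N,ε}(μ)` given the realized sample paths `xs 0, …, xs (N−1)`. -/
def Jhat (g : Fin T → Path T d → ℝ) (μ : Fin T → State d → Bool)
    (ε : ℝ) (N : ℕ) (xs : ℕ → Path T d) : ℝ :=
  (N : ℝ)⁻¹ * ∑ i ∈ Finset.range N, worstCase g μ ε (xs i)

/-- `Δ_ε(z) = min_{t} (inf_{‖y − z‖_∞ ≤ ε} g(t,y) − g(t,z))`. -/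
def Delta (g : Fin T → Path T d → ℝ) (ε : ℝ) (z : Path T d) : ℝ :=
  sInf (Set.range fun t : Fin T =>
    sInf ((g t) '' {y : Path T d | ‖y - z‖ ≤ ε}) - g t z)

/-- The reward along `z` as a function of the vector `b` of stopping decisions. -/
def decisionReward (g : Fin T → Path T d → ℝ) (b : Fin T → Bool) (z : Path T d) : ℝ :=
  if h : (Finset.univ.filter (fun t => b t = true)).Nonempty then
    g ((Finset.univ.filter (fun t => b t = true)).min' h) z
  else 0

lemma stopReward_eq_decisionReward (g : Fin T → Path T d → ℝ) (μ : Fin T → State d → Bool)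
    (y z : Path T d) : stopReward g μ y z = decisionReward g (fun t => μ t (y t)) z := rfl

lemma stopReward_nonneg {g : Fin T → Path T d → ℝ} (hg0 : ∀ t y, 0 ≤ g t y)
    (μ : Fin T → State d → Bool) (y z : Path T d) : 0 ≤ stopReward g μ y z := by
  unfold stopReward
  split_ifs
  · exact hg0 _ _
  · exact le_rfl

lemma stopReward_le {g : Fin T → Path T d → ℝ} {U : ℝ} (hU : 0 ≤ U)
    (hgU : ∀ t (y : Path T d), g t y ≤ U)
    (μ : Fin T → State d → Bool) (y z : Path T d) : stopReward g μ y z ≤ U := by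
  unfold stopReward
  split_ifs
  · exact hgU _ _
  · exact hU

lemma measurable_stopReward {g : Fin T → Path T d → ℝ} (hgm : ∀ t, Measurable (g t))
    {μ : Fin T → State d → Bool} (hμ : MeasPolicy μ) :
    Measurable fun z : Path T d => stopReward g μ z z := by
  -- There are only countably many decision vectors, so joint measurability is checked slicewise.
  have hF : Measurable fun p : (Fin T → Bool) × Path T d => decisionReward g p.1 p.2 := by
    refine measurable_from_prod_countable_right fun b => ?_
    simp only [decisionReward]
    split_ifs with h
    · exact hgm (Finset.min' _ h)
    · exact measurable_const
  exact hF.comp ((measurable_pi_lambda _ fun t =>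
    (hμ t).comp (measurable_pi_apply t)).prodMk measurable_id)

lemma integrable_stopReward {Ω : Type*} [MeasurableSpace Ω] {P : Measure Ω} [IsProbabilityMeasure P]
    {x : Ω → Path T d} (hx : Measurable x) {g : Fin T → Path T d → ℝ}
    (hgm : ∀ t, Measurable (g t)) {U : ℝ} (hU : 0 ≤ U) (hg0 : ∀ t y, 0 ≤ g t y)
    (hgU : ∀ t (y : Path T d), g t y ≤ U) {μ : Fin T → State d → Bool} (hμ : MeasPolicy μ) :
    Integrable (fun ω => stopReward g μ (x ω) (x ω)) P := by
  refine Integrable.of_bound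
    ((measurable_stopReward hgm hμ).comp hx).aestronglyMeasurable U (ae_of_all _ fun ω => ?_)
  rw [Real.norm_of_nonneg (stopReward_nonneg hg0 _ _ _)]
  exact stopReward_le hU hgU _ _ _

lemma isBoundedUnder_ge_stopReward {g : Fin T → Path T d → ℝ} (hg0 : ∀ t y, 0 ≤ g t y)
    (μ : Fin T → State d → Bool) (z : Path T d) (l : Filter (Path T d)) :
    l.IsBoundedUnder (· ≥ ·) fun y => stopReward g μ y z :=
  isBoundedUnder_of ⟨0, fun _ => stopReward_nonneg hg0 _ _ _⟩

lemma isBoundedUnder_le_stopReward {g : Fin T → Path T d → ℝ} {U : ℝ} (hU : 0 ≤ U)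
    (hgU : ∀ t (y : Path T d), g t y ≤ U)
    (μ : Fin T → State d → Bool) (z : Path T d) (l : Filter (Path T d)) :
    l.IsBoundedUnder (· ≤ ·) fun y => stopReward g μ y z :=
  isBoundedUnder_of ⟨U, fun _ => stopReward_le hU hgU _ _ _⟩

lemma liminf_stopReward_nonneg {g : Fin T → Path T d → ℝ} {U : ℝ} (hU : 0 ≤ U)
    (hg0 : ∀ t y, 0 ≤ g t y) (hgU : ∀ t (y : Path T d), g t y ≤ U)
    (μ : Fin T → State d → Bool) (z : Path T d) :
    0 ≤ liminf (fun y => stopReward g μ y z) (𝓝 z) :=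
  le_liminf_of_le (isBoundedUnder_le_stopReward hU hgU μ z _).isCoboundedUnder_ge
    (Eventually.of_forall fun _ => stopReward_nonneg hg0 _ _ _)

lemma liminf_stopReward_le {g : Fin T → Path T d → ℝ} (hg0 : ∀ t y, 0 ≤ g t y)
    (μ : Fin T → State d → Bool) (z : Path T d) :
    liminf (fun y => stopReward g μ y z) (𝓝 z) ≤ stopReward g μ z z := by
  refine liminf_le_of_frequently_le ?_ (isBoundedUnder_ge_stopReward hg0 μ z _)
  intro h
  exact h.self_of_nhds le_rfl

/-- Where no coordinate lies on the frontier of its stopping region, the stopping decisions are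
locally constant and the liminf is attained at the point itself. -/
lemma liminf_stopReward_eq (g : Fin T → Path T d → ℝ) (μ : Fin T → State d → Bool) (z : Path T d)
    (hz : ∀ t, z t ∉ frontier {s | μ t s = true}) :
    liminf (fun y => stopReward g μ y z) (𝓝 z) = stopReward g μ z z := by
  have hloc : ∀ t, ∀ᶠ y : Path T d in 𝓝 z, μ t (y t) = μ t (z t) := by
    intro t
    have ht : Tendsto (fun y : Path T d => y t) (𝓝 z) (𝓝 (z t)) :=
      (continuous_apply t).continuousAt
    refine ht.eventually (p := fun s => μ t s = μ t (z t)) ?_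
    have h := hz t
    rw [frontier_eq_closure_inter_closure, Set.mem_inter_iff, not_and_or] at h
    rcases h with h | h
    · have h1 : {s | μ t s = true}ᶜ ∈ 𝓝 (z t) := by
        rw [← mem_interior_iff_mem_nhds, interior_compl]; exact h
      have h2 := mem_of_mem_nhds h1
      filter_upwards [h1] with s hs
      simp_all
    · have h1 : {s | μ t s = true} ∈ 𝓝 (z t) := by
        rw [← mem_interior_iff_mem_nhds, ← compl_compl (interior _), ← closure_compl]; exact h
      have h2 := mem_of_mem_nhds h1
      filter_upwards [h1] with s hs
      simp_all
  have hev : ∀ᶠ y in 𝓝 z, stopReward g μ y z = stopReward g μ z z := by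
    filter_upwards [eventually_all.2 hloc] with y hy
    simp only [stopReward_eq_decisionReward, hy]
  rw [liminf_congr hev, liminf_const]

/-- Measurable sets are approximated in measure by sets with null frontier. -/
lemma exists_null_frontier_approx (ν : Measure (State d)) [IsFiniteMeasure ν] {A : Set (State d)}
    (hA : MeasurableSet A) {δ : ℝ} (hδ : 0 < δ) :
    ∃ A' D : Set (State d), MeasurableSet A' ∧ MeasurableSet D ∧ ν (frontier A') = 0 ∧
      (∀ s ∉ D, (s ∈ A' ↔ s ∈ A)) ∧ ν.real D ≤ δ := by
  have hδ2 : ENNReal.ofReal (δ / 2) ≠ 0 := by simpa using hδ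
  obtain ⟨V, hAV, hV, -, hVA⟩ := hA.exists_isOpen_sdiff_lt (measure_ne_top ν A) hδ2
  obtain ⟨K, hKA, hK, hAK⟩ := hA.exists_isCompact_sdiff_lt (measure_ne_top ν A) hδ2
  obtain ⟨b, hb, hbV⟩ := hK.exists_thickening_subset_open hV (hKA.trans hAV)
  obtain ⟨r, ⟨hr0, hrb⟩, hr⟩ := exists_null_frontier_thickening ν K hb
  refine ⟨Metric.thickening r K, (V \ A) ∪ (A \ K), Metric.isOpen_thickening.measurableSet,
    (hV.measurableSet.diff hA).union (hA.diff hK.measurableSet), hr, ?_, ?_⟩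
  · intro s hs
    have h1 : s ∈ Metric.thickening r K → s ∈ V := fun h =>
      hbV (Metric.thickening_mono hrb.le K h)
    have h2 : s ∈ K → s ∈ Metric.thickening r K := fun h => Metric.self_subset_thickening hr0 K h
    simp only [Set.mem_union, Set.mem_sdiff] at hs
    tauto
  · have e1 : ν.real (V \ A) ≤ δ / 2 := ENNReal.toReal_le_of_le_ofReal (by positivity) hVA.le
    have e2 : ν.real (A \ K) ≤ δ / 2 := ENNReal.toReal_le_of_le_ofReal (by positivity) hAK.le
    linarith [measureReal_union_le (μ := ν) (V \ A) (A \ K)]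

/-- Up to `ε`, every policy is matched in expected reward by the liminf evaluation of another. -/
lemma exists_policy_liminf {Ω : Type*} [MeasurableSpace Ω] {P : Measure Ω} [IsProbabilityMeasure P]
    {x : Ω → Path T d} (hx : Measurable x) {g : Fin T → Path T d → ℝ}
    (hgm : ∀ t, Measurable (g t)) {U : ℝ} (hU : 0 ≤ U) (hg0 : ∀ t y, 0 ≤ g t y)
    (hgU : ∀ t (y : Path T d), g t y ≤ U) {μ : Fin T → State d → Bool} (hμ : MeasPolicy μ)
    {ε : ℝ} (hε : 0 < ε) :
    ∃ μ' : Fin T → State d → Bool, MeasPolicy μ' ∧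
      ∫ ω, stopReward g μ (x ω) (x ω) ∂P
        ≤ ∫ ω, liminf (fun y => stopReward g μ' y (x ω)) (𝓝 (x ω)) ∂P + ε := by
  classical
  -- `T` bad events, each costing at most `U`, lose at most `T * (U * δ) ≤ ε` in total.
  set δ : ℝ := ε / (T * U + 1) with hδdef
  have hden : 0 < (T : ℝ) * U + 1 := by positivity
  have hδ : 0 < δ := div_pos hε hden
  have hxt : ∀ t, Measurable fun ω => x ω t := fun t => (measurable_pi_apply t).comp hx
  have hA : ∀ t, MeasurableSet {s | μ t s = true} := fun t => hμ t (measurableSet_singleton true)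
  have hprob : ∀ t, IsProbabilityMeasure (P.map fun ω => x ω t) := fun t =>
    Measure.isProbabilityMeasure_map (hxt t).aemeasurable
  choose A' D hA' hD hfr hAD hDδ using fun t =>
    exists_null_frontier_approx (P.map fun ω => x ω t) (hA t) hδ
  let μ' : Fin T → State d → Bool := fun t s => decide (s ∈ A' t)
  have hμ' : MeasPolicy μ' := fun t => measurable_to_bool (by
    have : μ' t ⁻¹' {true} = A' t := by ext s; simp [μ']
    rw [this]; exact hA' t)
  refine ⟨μ', hμ', ?_⟩
  have hlim : ∫ ω, liminf (fun y => stopReward g μ' y (x ω)) (𝓝 (x ω)) ∂P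
      = ∫ ω, stopReward g μ' (x ω) (x ω) ∂P := by
    refine integral_congr_ae ?_
    have : ∀ t, ∀ᵐ ω ∂P, x ω t ∉ frontier (A' t) := fun t =>
      ae_of_ae_map (hxt t).aemeasurable (measure_eq_zero_iff_ae_notMem.1 (hfr t))
    filter_upwards [ae_all_iff.2 this] with ω hω
    refine liminf_stopReward_eq g μ' (x ω) fun t => ?_
    simpa [μ'] using hω t
  have hDm : ∀ t, MeasurableSet ((fun ω => x ω t) ⁻¹' D t) := fun t => hxt t (hD t)
  have hind : ∀ t, Integrable (((fun ω => x ω t) ⁻¹' D t).indicator fun _ => U) P := fun t =>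
    (integrable_const U).indicator (hDm t)
  have hsum := integrable_finsetSum Finset.univ fun t _ => hind t
  have hI := integrable_stopReward (P := P) hx hgm hU hg0 hgU hμ
  have hI' := integrable_stopReward (P := P) hx hgm hU hg0 hgU hμ'
  have hpt : ∀ ω, stopReward g μ (x ω) (x ω) ≤ stopReward g μ' (x ω) (x ω)
      + ∑ t, ((fun ω => x ω t) ⁻¹' D t).indicator (fun _ => U) ω := by
    intro ω
    have hnn : ∀ t ∈ Finset.univ, 0 ≤ ((fun ω => x ω t) ⁻¹' D t).indicator (fun _ => U) ω :=
      fun t _ => Set.indicator_nonneg (fun _ _ => hU) ω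
    by_cases h : ∃ t, x ω t ∈ D t
    · obtain ⟨t, ht⟩ := h
      have h1 := Finset.single_le_sum hnn (Finset.mem_univ t)
      rw [Set.indicator_of_mem (show ω ∈ (fun ω => x ω t) ⁻¹' D t from ht)] at h1
      linarith [stopReward_le hU hgU μ (x ω) (x ω), stopReward_nonneg hg0 μ' (x ω) (x ω)]
    · push Not at h
      have h1 : (fun t => μ t (x ω t)) = fun t => μ' t (x ω t) := by
        funext t
        have := hAD t _ (h t)
        rw [Bool.eq_iff_iff]
        simpa [μ'] using this.symm
      rw [stopReward_eq_decisionReward, stopReward_eq_decisionReward, h1]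
      linarith [Finset.sum_nonneg hnn]
  have hle := integral_mono hI (hI'.add hsum) hpt
  have hsplit := integral_add hI' hsum
  have hS : ∫ ω, ∑ t, ((fun ω => x ω t) ⁻¹' D t).indicator (fun _ => U) ω ∂P ≤ ε := by
    rw [integral_finsetSum _ fun t _ => hind t]
    calc ∑ t, ∫ ω, ((fun ω => x ω t) ⁻¹' D t).indicator (fun _ => U) ω ∂P
        ≤ ∑ _t : Fin T, U * δ := by
          refine Finset.sum_le_sum fun t _ => ?_
          rw [integral_indicator_const _ (hDm t), smul_eq_mul, mul_comm]
          refine mul_le_mul_of_nonneg_left ?_ hU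
          rw [← map_measureReal_apply (hxt t) (hD t)]
          exact hDδ t
      _ = (T * U) * δ := by simp [mul_assoc]
      _ ≤ (T * U + 1) * δ := by nlinarith
      _ = ε := by rw [hδdef]; field_simp
  rw [hlim]
  exact hle.trans (hsplit.le.trans (by linarith))

/-- **Approximation by lower-semicontinuous evaluations of stopping rules.**
Under Assumptions (A3) and (A4),
`sup_μ E[g(τ_μ(x), x)] = sup_μ E[liminf_{y→x} g(τ_μ(y), x)]`. -/
theorem lsc_evaluation_approximation
    {T d : ℕ} (hT : 0 < T) (hd : 0 < d)
    {Ω : Type*} [MeasurableSpace Ω] (P : Measure Ω) [IsProbabilityMeasure P]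
    (x : Ω → Path T d) (hx : Measurable x)
    (g : Fin T → Path T d → ℝ) (hgm : ∀ t, Measurable (g t))
    (U : ℝ) (hg0 : ∀ t y, 0 ≤ g t y) (hgU : ∀ t (y : Path T d), g t y ≤ U)
    (hA3 : Measure.map x P ≪ (volume : Measure (Path T d))) :
    sSup {v : ℝ | ∃ μ : Fin T → State d → Bool, MeasPolicy μ ∧
        v = ∫ ω, stopReward g μ (x ω) (x ω) ∂P}
      = sSup {v : ℝ | ∃ μ : Fin T → State d → Bool, MeasPolicy μ ∧
          v = ∫ ω, Filter.liminf (fun y => stopReward g μ y (x ω)) (𝓝 (x ω)) ∂P} := by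
  have hU : 0 ≤ U := (hg0 ⟨0, hT⟩ 0).trans (hgU ⟨0, hT⟩ 0)
  have hle : ∀ μ : Fin T → State d → Bool, MeasPolicy μ →
      ∫ ω, liminf (fun y => stopReward g μ y (x ω)) (𝓝 (x ω)) ∂P
        ≤ ∫ ω, stopReward g μ (x ω) (x ω) ∂P := fun μ hμ =>
    -- Measurability of the liminf is not needed: otherwise its Bochner integral is zero.
    integral_mono_of_nonneg (ae_of_all _ fun ω => liminf_stopReward_nonneg hU hg0 hgU μ (x ω))
      (integrable_stopReward hx hgm hU hg0 hgU hμ)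
      (ae_of_all _ fun ω => liminf_stopReward_le hg0 μ (x ω))
  have hbd : ∀ μ : Fin T → State d → Bool, MeasPolicy μ →
      ∫ ω, stopReward g μ (x ω) (x ω) ∂P ≤ U := fun μ hμ => by
    simpa using integral_mono (integrable_stopReward hx hgm hU hg0 hgU hμ)
      (integrable_const (μ := P) U) fun ω => stopReward_le hU hgU μ (x ω) (x ω)
  have hne : MeasPolicy (fun (_ : Fin T) (_ : State d) => false) := fun _ => measurable_const
  apply le_antisymm
  · refine csSup_le ⟨_, _, hne, rfl⟩ ?_
    rintro _ ⟨μ, hμ, rfl⟩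
    refine le_of_forall_pos_le_add fun ε hε => ?_
    obtain ⟨μ', hμ', h⟩ := exists_policy_liminf (P := P) hx hgm hU hg0 hgU hμ hε
    refine h.trans (add_le_add (le_csSup ⟨U, ?_⟩ ⟨μ', hμ', rfl⟩) le_rfl)
    rintro _ ⟨ρ, hρ, rfl⟩
    exact (hle ρ hρ).trans (hbd ρ hρ)
  · refine csSup_le ⟨_, _, hne, rfl⟩ ?_
    rintro _ ⟨μ, hμ, rfl⟩
    refine (hle μ hμ).trans (le_csSup ⟨U, ?_⟩ ⟨μ, hμ, rfl⟩)
    rintro _ ⟨ρ, hρ, rfl⟩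
    exact hbd ρ hρ

end
end RobustStoppingProb
end
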